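/- Let C^{2d}/μ_n be an isolated cyclic quotient singularity of type (a₁/n,…,a_{2d}/n), i.e., gcd(aᵢ,n) = 1 for all i. If the minimal log-discrepancy min_{t=1,…,n-1} ∑_{i=1}^{2d}{t·aᵢ/n} is at least d, then after a permutation of the indices, a_{2i-1} ≡ -a_{2i} (mod n) for all i = 1,…,d. -/

import Mathlib

/-!
Since `{x} + {-x} = 1` for `x ∉ ℤ`, the bound on the sums `∑ i, {t a_i / n}` at both `t` and `-t`
forces them all to equal `d`. Let `χ` be an odd Dirichlet character modulo `n`. Weighting these
equalities by the discrete Fourier transform `𝓕 χ` and summing over `t` gives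
`(∑ i, χ (a_i)) * ∑ t, 𝓕 χ t * t = 0`. The second factor is, up to a nonzero constant, the value
at `0` of the L-function of `𝓕 χ`, hence by the functional equation a nonzero multiple of
`L(1, χ)`, which is nonzero. So every odd character sums to zero over the `a_i`, the multiset of
the `a_i` modulo `n` is invariant under negation, and its members can be paired up.

Using `𝓕 χ` in place of `χ⁻¹` keeps the argument at level `n` even when `χ` is imprimitive.
-/

open Asymptotics Filter HurwitzZeta MeasureTheory Set Topology
open scoped ZMod

theorem isBigO_div_sub_deriv_div_deriv {𝕜 : Type*} [NontriviallyNormedField 𝕜] {f g : 𝕜 → 𝕜}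
    {z₀ : 𝕜} (hf : AnalyticAt 𝕜 f z₀) (hg : AnalyticAt 𝕜 g z₀) (hf₀ : f z₀ = 0) (hg₀ : g z₀ = 0)
    (hg' : deriv g z₀ ≠ 0) :
    (fun z ↦ f z / g z - deriv f z₀ / deriv g z₀) =O[𝓝[≠] z₀] fun z ↦ z - z₀ := by
  have hdslope {h : 𝕜 → 𝕜} (hh : AnalyticAt 𝕜 h z₀) : DifferentiableAt 𝕜 (dslope h z₀) z₀ :=
    let ⟨_, hp⟩ := hh
    hp.has_fpower_series_dslope_fslope.analyticAt.differentiableAt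
  have hquot := ((hdslope hf).fun_div (hdslope hg) (by rwa [dslope_same])).isBigO_sub
  simp only [dslope_same] at hquot
  refine (hquot.mono nhdsWithin_le_nhds).congr' ?_ .rfl
  filter_upwards [self_mem_nhdsWithin] with z hz
  rw [dslope_of_ne _ hz, dslope_of_ne _ hz, slope_def_field, slope_def_field, hf₀, hg₀, sub_zero,
    sub_zero, div_div_div_cancel_right₀ (sub_ne_zero.mpr hz)]

theorem apply_zero_eq_zero_of_mellin_eq_Gamma_mul {G : ℝ → ℂ} {L : ℂ → ℂ} {b σ : ℝ}
    (hL : Differentiable ℂ L) (hb : 0 < b) (hG : ContinuousOn G (Ioi 0))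
    (htop : G =O[atTop] fun t ↦ Real.exp (-b * t)) (hzero : G =O[𝓝[>] 0] fun t ↦ t)
    (hmellin : ∀ s : ℂ, σ < s.re → mellin G s = Complex.Gamma s * L s) : L 0 = 0 := by
  -- `mellin G` extends analytically to `-1 < s.re`, and `1 / Γ` vanishes at `0`.
  let U : Set ℂ := {s | -1 < s.re}
  have hU : IsOpen U := isOpen_lt continuous_const Complex.continuous_re
  have hR : DifferentiableOn ℂ (fun s ↦ mellin G s * (Complex.Gamma s)⁻¹) U := fun s hs ↦
    ((mellin_differentiableAt_of_isBigO_rpow_exp hb (hG.locallyIntegrableOn measurableSet_Ioi)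
      htop (by simpa using hzero) hs).mul
      (Complex.differentiable_one_div_Gamma s)).differentiableWithinAt
  have hLR (s : ℂ) (hs : max σ 0 < s.re) : L s = mellin G s * (Complex.Gamma s)⁻¹ := by
    obtain ⟨hσ, hs₀⟩ := max_lt_iff.mp hs
    rw [hmellin s hσ, mul_comm, inv_mul_cancel_left₀ (Complex.Gamma_ne_zero_of_re_pos hs₀)]
  have hmem : ((max σ 0 + 1 : ℝ) : ℂ) ∈ U := by
    simp only [U, mem_ofPred_eq, Complex.ofReal_re]
    linarith [le_max_right σ 0]
  have heq := (hL.differentiableOn.analyticOnNhd hU).eqOn_of_preconnected_of_eventuallyEq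
    (hR.analyticOnNhd hU) (convex_halfSpace_re_gt (-1)).isPreconnected hmem <| by
      filter_upwards [(isOpen_lt continuous_const Complex.continuous_re).mem_nhds
        (show max σ 0 < (((max σ 0 + 1 : ℝ) : ℂ)).re by simp)] with s hs using hLR s hs
  simpa [Complex.Gamma_zero] using heq (show (0 : ℂ) ∈ U by simp [U])

lemma isBigO_exp_neg_sub_one : (fun t : ℝ ↦ (Real.exp (-t) : ℂ) - 1) =O[𝓝 0] fun t ↦ t := by
  have h : DifferentiableAt ℝ (fun t : ℝ ↦ (Real.exp (-t) : ℂ)) 0 := by fun_prop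
  simpa using h.isBigO_sub

lemma hasMellin_exp_neg {s : ℂ} (hs : 0 < s.re) :
    HasMellin (fun t : ℝ ↦ (Real.exp (-t) : ℂ)) s (Complex.Gamma s) := by
  refine ⟨(Complex.GammaIntegral_convergent hs).congr_fun (fun t _ ↦ ?_) measurableSet_Ioi, ?_⟩
  · simp [mul_comm]
  · rw [Complex.Gamma_eq_integral hs, Complex.GammaIntegral_eq_mellin]

lemma isBigO_atTop_exp_neg_mul_of_le {b u : ℝ} (hu : b ≤ u) :
    (fun t ↦ Real.exp (-u * t)) =O[atTop] fun t ↦ Real.exp (-b * t) := by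
  refine IsBigO.of_norm_eventuallyLE ?_
  filter_upwards [eventually_ge_atTop 0] with t ht
  rw [Real.norm_of_nonneg (Real.exp_nonneg _)]
  gcongr

theorem apply_zero_eq_of_mellin_eq_Gamma_mul {F : ℝ → ℂ} {L : ℂ → ℂ} {b σ : ℝ} {c : ℂ}
    (hL : Differentiable ℂ L) (hb : 0 < b) (hF : ContinuousOn F (Ioi 0))
    (htop : F =O[atTop] fun t ↦ Real.exp (-b * t))
    (hzero : (fun t ↦ F t - c) =O[𝓝[>] 0] fun t ↦ t)
    (hmellin : ∀ s : ℂ, σ < s.re → mellin F s = Complex.Gamma s * L s) : L 0 = c := by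
  -- The Mellin transform of `c * exp (-t)` is `c * Γ s`, so passing to `G` reduces to `c = 0`.
  let G : ℝ → ℂ := fun t ↦ F t - c * Real.exp (-t)
  have hb' : 0 < min b 1 := lt_min hb one_pos
  have hG : ContinuousOn G (Ioi 0) := hF.sub (by fun_prop)
  have hGtop : G =O[atTop] fun t ↦ Real.exp (-min b 1 * t) := by
    refine (htop.trans (isBigO_atTop_exp_neg_mul_of_le (min_le_left b 1))).sub
      (IsBigO.const_mul_left ?_ c)
    simpa only [Complex.isBigO_ofReal_left, neg_one_mul] using
      isBigO_atTop_exp_neg_mul_of_le (min_le_right b 1)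
  have hGzero : G =O[𝓝[>] 0] fun t ↦ t := by
    have hexp := isBigO_exp_neg_sub_one.mono (nhdsWithin_le_nhds (s := Ioi 0))
    refine (hzero.sub (hexp.const_mul_left c)).congr_left fun t ↦ ?_
    simp only [G]
    ring
  refine sub_eq_zero.mp (apply_zero_eq_zero_of_mellin_eq_Gamma_mul (σ := max σ 0)
    (hL.sub_const c) hb' hG hGtop hGzero fun s hs ↦ ?_)
  obtain ⟨hσ, hs₀⟩ := max_lt_iff.mp hs
  have hGs : MellinConvergent G s := mellinConvergent_of_isBigO_rpow_exp (b := -1) hb'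
    (hG.locallyIntegrableOn measurableSet_Ioi) hGtop (by simpa using hGzero) (by linarith)
  have hexp := hasMellin_const_smul (hasMellin_exp_neg hs₀).1 c
  have hsum := (hasMellin_add hGs hexp.1).2
  simp only [G, smul_eq_mul, sub_add_cancel, hmellin s hσ] at hsum hexp
  rw [hexp.2, (hasMellin_exp_neg hs₀).2] at hsum
  linear_combination -hsum

section Kernel

/-- The generating function `∑' n : ℤ, sign (n + x) / 2 * exp (-|n + x| * t)` in closed form,
for `0 < x < 1`; its Mellin transform is `Γ s * hurwitzZetaOdd x s`. -/
noncomputable def hurwitzOddExpKernel (x t : ℝ) : ℝ :=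
  (Real.exp (-x * t) - Real.exp (-(1 - x) * t)) / (2 * (1 - Real.exp (-t)))

variable {x : ℝ}

lemma one_sub_exp_neg_pos {t : ℝ} (ht : 0 < t) : 0 < 1 - Real.exp (-t) := by
  simpa

lemma hasSum_exp_neg_add_nat_mul (y : ℝ) {t : ℝ} (ht : 0 < t) :
    HasSum (fun n : ℕ ↦ Real.exp (-(n + y) * t)) (Real.exp (-y * t) / (1 - Real.exp (-t))) := by
  have h := (hasSum_geometric_of_lt_one (Real.exp_nonneg (-t))
    (Real.exp_lt_one_iff.mpr (neg_neg_of_pos ht))).mul_left (Real.exp (-y * t))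
  refine h.congr_fun fun n ↦ ?_
  rw [← Real.exp_nat_mul, ← Real.exp_add]
  ring_nf

lemma hasSum_int_hurwitzOddExpKernel (hx : x ∈ Ioo 0 1) {t : ℝ} (ht : 0 < t) :
    HasSum (fun n : ℤ ↦ (SignType.sign (n + x) : ℝ) / 2 * Real.exp (-|n + x| * t))
      (hurwitzOddExpKernel x t) := by
  have hpos (n : ℕ) : 0 < (n : ℝ) + x := by linarith [hx.1, n.cast_nonneg (α := ℝ)]
  have hneg (n : ℕ) : -((n : ℝ) + 1) + x < 0 := by linarith [hx.2, n.cast_nonneg (α := ℝ)]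
  have hsum : hurwitzOddExpKernel x t = 1 / 2 * (Real.exp (-x * t) / (1 - Real.exp (-t))) +
      -1 / 2 * (Real.exp (-(1 - x) * t) / (1 - Real.exp (-t))) := by
    rw [hurwitzOddExpKernel]
    field_simp
    ring
  rw [hsum]
  refine HasSum.of_nat_of_neg_add_one ?_ ?_
  · refine ((hasSum_exp_neg_add_nat_mul x ht).mul_left (1 / 2)).congr_fun fun n ↦ ?_
    simp [sign_pos (hpos n), abs_of_pos (hpos n)]
  · refine ((hasSum_exp_neg_add_nat_mul (1 - x) ht).mul_left (-1 / 2)).congr_fun fun n ↦ ?_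
    push_cast
    rw [sign_neg (hneg n), abs_of_neg (hneg n)]
    simp only [SignType.coe_neg_one]
    ring_nf

lemma continuousOn_hurwitzOddExpKernel (x : ℝ) : ContinuousOn (hurwitzOddExpKernel x) (Ioi 0) :=
  ContinuousOn.div (by fun_prop) (by fun_prop) fun _ ht ↦
    (mul_pos two_pos (one_sub_exp_neg_pos ht)).ne'

lemma isBigO_atTop_hurwitzOddExpKernel (x : ℝ) :
    hurwitzOddExpKernel x =O[atTop] fun t ↦ Real.exp (-min x (1 - x) * t) := by
  have hnum := (isBigO_atTop_exp_neg_mul_of_le (min_le_left x (1 - x))).sub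
    (isBigO_atTop_exp_neg_mul_of_le (min_le_right x (1 - x)))
  have hden : Tendsto (fun t : ℝ ↦ 2 * (1 - Real.exp (-t))) atTop (𝓝 2) := by
    simpa using (Real.tendsto_exp_neg_atTop_nhds_zero.const_sub 1).const_mul 2
  simpa only [mul_one, ← div_eq_mul_inv, ← hurwitzOddExpKernel.eq_1] using
    hnum.mul ((hden.inv₀ two_ne_zero).isBigO_one ℝ)

lemma isBigO_hurwitzOddExpKernel_sub (x : ℝ) :
    (fun t ↦ hurwitzOddExpKernel x t - (1 / 2 - x)) =O[𝓝[>] 0] fun t ↦ t := by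
  have hnum : HasDerivAt (fun t ↦ Real.exp (-x * t) - Real.exp (-(1 - x) * t)) (1 - 2 * x) 0 := by
    have hexp (y : ℝ) : HasDerivAt (fun t ↦ Real.exp (-y * t)) (-y) 0 := by
      simpa using ((hasDerivAt_id (0 : ℝ)).const_mul (-y)).exp
    convert! (hexp x).sub (hexp (1 - x)) using 1
    ring
  have hden : HasDerivAt (fun t : ℝ ↦ 2 * (1 - Real.exp (-t))) 2 0 := by
    simpa using ((hasDerivAt_neg (0 : ℝ)).exp.const_sub 1).const_mul 2
  have h := isBigO_div_sub_deriv_div_deriv (z₀ := (0 : ℝ))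
    (f := fun t ↦ Real.exp (-x * t) - Real.exp (-(1 - x) * t))
    (g := fun t ↦ 2 * (1 - Real.exp (-t))) (by fun_prop) (by fun_prop) (by simp) (by simp)
    (by simp [hden.deriv])
  simp only [hnum.deriv, hden.deriv, sub_zero] at h
  refine (h.mono (nhdsWithin_mono _ fun t ↦ ne_of_gt)).congr_left fun t ↦ ?_
  rw [hurwitzOddExpKernel]
  ring

lemma mellin_hurwitzOddExpKernel (hx : x ∈ Ioo 0 1) {s : ℂ} (hs : 1 < s.re) :
    mellin (fun t ↦ (hurwitzOddExpKernel x t : ℂ)) s =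
      Complex.Gamma s * hurwitzZetaOdd x s := by
  have hodd := hasSum_int_hurwitzZetaOdd x hs
  have hne (n : ℤ) : (n + x : ℝ) ≠ 0 := by
    intro h
    have h₀ : ((-1 : ℤ) : ℝ) < n := by push_cast; linarith [hx.2]
    have h₁ : (n : ℝ) < (0 : ℤ) := by push_cast; linarith [hx.1]
    rw [Int.cast_lt] at h₀ h₁
    omega
  have hsign (n : ℤ) : ((SignType.sign (n + x) : ℝ) : ℂ) = SignType.sign (n + x) :=
    SignType.map_cast Complex.ofRealHom _
  refine HasSum.unique (hasSum_mellin (p := fun n : ℤ ↦ |n + x|)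
    (a := fun n : ℤ ↦ ((SignType.sign (n + x) / 2 : ℝ) : ℂ))
    (fun n ↦ .inr (abs_pos.mpr (hne n))) (one_pos.trans hs) (fun t ht ↦ ?_) ?_)
    ((hodd.mul_left (Complex.Gamma s)).congr_fun fun n ↦ ?_)
  · exact_mod_cast hasSum_int_hurwitzOddExpKernel hx ht
  · refine hodd.summable.norm.congr fun n ↦ ?_
    rw [← hsign, div_right_comm, norm_div _ (_ ^ s),
      Complex.norm_cpow_eq_rpow_re_of_pos (abs_pos.mpr (hne n)), ← Complex.ofReal_ofNat,
      ← Complex.ofReal_div]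
  · rw [Complex.ofReal_div, hsign, Complex.ofReal_ofNat]
    ring

theorem hurwitzZetaOdd_apply_zero (hx : x ∈ Ioo 0 1) : hurwitzZetaOdd x 0 = 1 / 2 - x := by
  have hmin : 0 < min x (1 - x) := lt_min hx.1 (sub_pos.mpr hx.2)
  refine apply_zero_eq_of_mellin_eq_Gamma_mul (differentiable_hurwitzZetaOdd _) hmin
    (Complex.continuous_ofReal.comp_continuousOn (continuousOn_hurwitzOddExpKernel x))
    (Complex.isBigO_ofReal_left.mpr (isBigO_atTop_hurwitzOddExpKernel x)) ?_
    fun s ↦ mellin_hurwitzOddExpKernel hx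
  simpa using Complex.isBigO_ofReal_left.mpr (isBigO_hurwitzOddExpKernel_sub x)

end Kernel

section LFunction

variable {N : ℕ} [NeZero N]

theorem zmod_LFunction_apply_zero_of_odd {Φ : ZMod N → ℂ} (hΦ : Φ.Odd) :
    ZMod.LFunction Φ 0 = -(∑ j, Φ j * j.val) / N := by
  have hN : 0 < (N : ℝ) := Nat.cast_pos.mpr (NeZero.pos N)
  have hterm (j : ZMod N) :
      Φ j * hurwitzZetaOdd (ZMod.toAddCircle j) 0 = Φ j / 2 - Φ j * j.val / N := by
    rcases eq_or_ne j 0 with rfl | hj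
    · simp [hΦ.map_zero]
    have hval : (j.val / N : ℝ) ∈ Ioo 0 1 :=
      ⟨div_pos (Nat.cast_pos.mpr (ZMod.val_pos.mpr hj)) hN,
        (div_lt_one hN).mpr (Nat.cast_lt.mpr j.val_lt)⟩
    rw [ZMod.toAddCircle_apply, hurwitzZetaOdd_apply_zero hval]
    push_cast
    ring
  rw [ZMod.LFunction_def_odd hΦ, neg_zero, Complex.cpow_zero, one_mul,
    Finset.sum_congr rfl fun j _ ↦ hterm j, Finset.sum_sub_distrib, ← Finset.sum_div,
    ← Finset.sum_div, hΦ.sum_eq_zero]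
  ring

lemma zmod_LFunction_const_mul (c : ℂ) (Φ : ZMod N → ℂ) (s : ℂ) :
    ZMod.LFunction (fun j ↦ c * Φ j) s = c * ZMod.LFunction Φ s := by
  simp only [ZMod.LFunction, mul_assoc, ← Finset.mul_sum]
  ring

theorem zmod_LFunction_apply_zero_eq_LFunction_dft_apply_one {Φ : ZMod N → ℂ} (hΦ : Φ.Odd) :
    ZMod.LFunction Φ 0 = Complex.I / Real.pi * ZMod.LFunction (𝓕 Φ) 1 := by
  have hneg : (𝓕 fun j ↦ Φ (-j)) = fun k ↦ -1 * 𝓕 Φ k := by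
    rw [← ZMod.dft_const_mul]
    exact congrArg _ (funext fun j ↦ by rw [hΦ, neg_one_mul])
  have hone (n : ℕ) : (1 : ℂ) ≠ -n := fun h ↦ by
    have h' : ((1 + n : ℕ) : ℂ) = 0 := by rw [Nat.cast_add, Nat.cast_one, h, neg_add_cancel]
    exact absurd (Nat.cast_eq_zero.mp h') (by simp)
  have h := ZMod.LFunction_one_sub Φ hone (.inl hΦ.map_zero)
  have hexp : Complex.exp (Real.pi * Complex.I * 1 / 2) = Complex.I := by
    rw [mul_one, mul_div_right_comm, Complex.exp_pi_div_two_mul_I]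
  have hexp' : Complex.exp (-Real.pi * Complex.I * 1 / 2) = -Complex.I := by
    rw [mul_one, mul_div_right_comm, Complex.exp_neg_pi_div_two_mul_I]
  rw [hneg, zmod_LFunction_const_mul, hexp, hexp', sub_self, Complex.cpow_zero,
    Complex.cpow_neg_one, Complex.Gamma_one] at h
  rw [h]
  field_simp
  ring

end LFunction

section OddCharacters

variable {n : ℕ} [NeZero n] {χ : DirichletCharacter ℂ n}

theorem sum_dft_char_mul_val_ne_zero (hχ : χ.Odd) : ∑ j, 𝓕 χ j * j.val ≠ 0 := by
  have hne : χ ≠ 1 := by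
    rintro rfl
    exact DirichletCharacter.Odd.not_even 1 hχ (MulChar.one_apply_coe (-1))
  have hdft : 𝓕 (𝓕 χ) = fun j ↦ -(n : ℂ) * χ j := by
    rw [ZMod.dft_dft]
    exact funext fun j ↦ by rw [hχ.to_fun, smul_neg, smul_eq_mul, neg_mul]
  have hodd : (𝓕 χ).Odd := ZMod.dft_odd_iff.mpr hχ.to_fun
  have h₀ := zmod_LFunction_apply_zero_eq_LFunction_dft_apply_one hodd
  rw [zmod_LFunction_apply_zero_of_odd hodd, hdft, zmod_LFunction_const_mul] at h₀
  intro h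
  rw [h, neg_zero, zero_div, eq_comm] at h₀
  have hL : ZMod.LFunction χ 1 ≠ 0 := DirichletCharacter.LFunction_apply_one_ne_zero hne
  simp [hL, NeZero.ne n, Real.pi_ne_zero] at h₀

lemma dft_char_inv_mul (χ : DirichletCharacter ℂ n) (u : (ZMod n)ˣ) (k : ZMod n) :
    𝓕 χ (u⁻¹.val * k) = χ u * 𝓕 χ k := by
  rw [← ZMod.dft_comp_unitMul]
  simp only [map_mul, ZMod.dft_const_mul]

lemma sum_dft_char_mul_val_mul (χ : DirichletCharacter ℂ n) (u : (ZMod n)ˣ) :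
    ∑ t, 𝓕 χ t * ((t * u).val : ℂ) = χ u * ∑ t, 𝓕 χ t * t.val := by
  rw [Finset.mul_sum, ← Equiv.sum_comp u⁻¹.mulLeft]
  refine Finset.sum_congr rfl fun t _ ↦ ?_
  have ht : u⁻¹.mulLeft t * u = t := by
    rw [Units.mulLeft_apply, mul_right_comm, Units.inv_mul, one_mul]
  rw [ht, Units.mulLeft_apply, dft_char_inv_mul, mul_assoc]

variable {ι : Type*} [Fintype ι] {a : ι → (ZMod n)ˣ}

theorem sum_char_eq_zero_of_sum_val_eq {c : ℕ} (hc : ∀ t : ZMod n, t ≠ 0 → ∑ i, (t * a i).val = c)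
    (hχ : χ.Odd) : ∑ i, χ (a i) = 0 := by
  have hodd : (𝓕 χ).Odd := ZMod.dft_odd_iff.mpr hχ.to_fun
  have hzero : (∑ i, χ (a i)) * ∑ t, 𝓕 χ t * t.val = 0 := calc
    _ = ∑ t, 𝓕 χ t * ∑ i, ((t * a i).val : ℂ) := by
      simp_rw [Finset.sum_mul, ← sum_dft_char_mul_val_mul, Finset.mul_sum]
      exact Finset.sum_comm
    _ = ∑ t, 𝓕 χ t * c := Finset.sum_congr rfl fun t _ ↦ by
      rcases eq_or_ne t 0 with rfl | ht
      · simp [hodd.map_zero]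
      · rw [← hc t ht, Nat.cast_sum]
    _ = 0 := by rw [← Finset.sum_mul, hodd.sum_eq_zero, zero_mul]
  exact (mul_eq_zero.mp hzero).resolve_right (sum_dft_char_mul_val_ne_zero hχ)

theorem card_fiber_eq_card_fiber_neg_of_sum_char_eq_zero
    (hodd : ∀ χ : DirichletCharacter ℂ n, χ.Odd → ∑ i, χ (a i) = 0)
    (b : (ZMod n)ˣ) : Nat.card {i // a i = b} = Nat.card {i // a i = -b} := by
  have hfiber (u : (ZMod n)ˣ) : (n.totient : ℂ) * Nat.card {i // a i = u} =
      ∑ χ : DirichletCharacter ℂ n, χ (u⁻¹ : (ZMod n)ˣ) * ∑ i, χ (a i) := by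
    simp_rw [Finset.mul_sum]
    rw [Finset.sum_comm]
    simp only [← ZMod.inv_coe_unit, DirichletCharacter.sum_char_inv_mul_char_eq ℂ u.isUnit]
    simp [Units.val_inj, Finset.sum_ite, Fintype.card_subtype, mul_comm, eq_comm]
  have htot : (n.totient : ℂ) ≠ 0 :=
    Nat.cast_ne_zero.mpr (Nat.totient_pos.mpr (NeZero.pos n)).ne'
  rw [← Nat.cast_inj (R := ℂ), ← mul_right_inj' htot, hfiber, hfiber]
  refine Finset.sum_congr rfl fun χ _ ↦ ?_
  rcases χ.even_or_odd with hχ | hχ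
  · rw [inv_neg, Units.val_neg, hχ.eval_neg]
  · rw [hodd χ hχ, mul_zero, mul_zero]

theorem sum_val_eq_of_le {c : ℕ} (hcard : Fintype.card ι * n = 2 * c)
    (hle : ∀ t : ZMod n, t ≠ 0 → c ≤ ∑ i, (t * a i).val) {t : ZMod n} (ht : t ≠ 0) :
    ∑ i, (t * a i).val = c := by
  have hadd : ∑ i, (t * a i).val + ∑ i, (-t * a i).val = 2 * c := calc
    _ = ∑ _ : ι, n := by
      rw [← Finset.sum_add_distrib]
      refine Finset.sum_congr rfl fun i _ ↦ ?_
      rw [neg_mul, ZMod.neg_val, if_neg ((a i).mul_left_eq_zero.not.mpr ht)]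
      exact Nat.add_sub_cancel' (ZMod.val_lt _).le
    _ = 2 * c := by simpa using hcard
  have := hle t ht
  have := hle (-t) (neg_ne_zero.mpr ht)
  omega

end OddCharacters

section Pairing

lemma exists_perm_apply_two_mul_of_sum_equiv {d : ℕ} {α : Type*} (e : α ⊕ α ≃ Fin (2 * d)) :
    ∃ (f : Fin d ≃ α) (σ : Equiv.Perm (Fin (2 * d))), ∀ i : Fin d,
      σ ⟨2 * i, by omega⟩ = e (.inl (f i)) ∧ σ ⟨2 * i + 1, by omega⟩ = e (.inr (f i)) := by
  have : Finite α := .of_injective _ (e.injective.comp Sum.inl_injective)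
  have hcard : Nat.card α = d := by
    have h := Nat.card_congr e
    rw [Nat.card_sum, Nat.card_fin] at h
    omega
  let f : Fin d ≃ α := (Finite.equivFinOfCardEq hcard).symm
  let parity : Fin (2 * d) ≃ Fin 2 × Fin d :=
    ((finCongr (mul_comm 2 d)).trans finProdFinEquiv.symm).trans (Equiv.prodComm _ _)
  have hparity (r : Fin 2) (i : Fin d) (h : 2 * (i : ℕ) + r < 2 * d) :
      parity ⟨2 * i + r, h⟩ = (r, i) := by
    rw [← Equiv.eq_symm_apply]
    ext
    simp [parity, add_comm]
  refine ⟨f, parity.trans <| (finTwoEquiv.prodCongr f).trans <| (Equiv.boolProdEquivSum α).trans e,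
    fun i ↦ ⟨congrArg e ?_, congrArg e ?_⟩⟩
  · simp [show parity ⟨2 * i, _⟩ = (0, i) from hparity 0 i _, finTwoEquiv]
  · simp [show parity ⟨2 * i + 1, _⟩ = (1, i) from hparity 1 i _, finTwoEquiv]

variable {ι G : Type*} [Finite ι] [InvolutiveNeg G] {a : ι → G}

lemma exists_perm_apply_eq_neg_of_card_fiber
    (hcard : ∀ b, Nat.card {i // a i = b} = Nat.card {i // a i = -b}) :
    ∃ ρ : Equiv.Perm ι, ∀ i, a (ρ i) = -a i := by
  have hfiber (b : G) : Nonempty ({i // -a i = b} ≃ {i // a i = b}) := by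
    rw [← Finite.card_eq, hcard b]
    simp only [neg_eq_iff_eq_neg]
  exact ⟨Equiv.ofFiberEquiv fun b ↦ (hfiber b).some, Equiv.ofFiberEquiv_map _⟩

lemma exists_equiv_compl_apply_eq_neg (hne : ∀ i, a i ≠ -a i)
    (hcard : ∀ b, Nat.card {i // a i = b} = Nat.card {i // a i = -b}) :
    ∃ (s : Set ι) (e : s ≃ (sᶜ : Set ι)), ∀ i, a (e i) = -a i := by
  obtain ⟨ρ, hρ⟩ := exists_perm_apply_eq_neg_of_card_fiber hcard
  classical
  -- The order selects one member of each pair of opposite values.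
  let : LinearOrder G := linearOrderOfSTO WellOrderingRel
  refine ⟨{i | a i < -a i}, ρ.subtypeEquiv fun i ↦ ?_, fun i ↦ hρ i⟩
  simp [hρ, (hne i).le_iff_lt]

theorem exists_perm_apply_eq_neg {d : ℕ} {a : Fin (2 * d) → G} (hne : ∀ i, a i ≠ -a i)
    (hcard : ∀ b, Nat.card {i // a i = b} = Nat.card {i // a i = -b}) :
    ∃ σ : Equiv.Perm (Fin (2 * d)), ∀ i : Fin d,
      a (σ ⟨2 * i + 1, by omega⟩) = -a (σ ⟨2 * i, by omega⟩) := by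
  obtain ⟨s, e, he⟩ := exists_equiv_compl_apply_eq_neg hne hcard
  classical
  obtain ⟨f, σ, hσ⟩ := exists_perm_apply_two_mul_of_sum_equiv
    (((Equiv.refl s).sumCongr e).trans (Equiv.Set.sumCompl s))
  refine ⟨σ, fun i ↦ ?_⟩
  simpa [hσ i] using he (f i)

end Pairing

lemma units_zmod_eq_neg {n : ℕ} (hn : n ∣ 2) (u v : (ZMod n)ˣ) : u = -v := by
  rcases (Nat.dvd_prime Nat.prime_two).mp hn with rfl | rfl
  · exact Subsingleton.elim _ _
  · revert u v
    decide

lemma units_zmod_ne_neg {n : ℕ} (hn : ¬n ∣ 2) (u : (ZMod n)ˣ) : u ≠ -u := by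
  intro hu
  have h : (2 : ZMod n) * u = 0 := by
    rw [two_mul]
    nth_rw 2 [hu]
    rw [Units.val_neg, add_neg_cancel]
  rw [Units.mul_left_eq_zero] at h
  exact hn ((ZMod.natCast_eq_zero_iff 2 n).mp (by exact_mod_cast h))

theorem exists_perm_apply_eq_neg_of_le_sum_val {d n : ℕ} [NeZero n] {a : Fin (2 * d) → (ZMod n)ˣ}
    (hle : ∀ t : ZMod n, t ≠ 0 → d * n ≤ ∑ i, (t * a i).val) :
    ∃ σ : Equiv.Perm (Fin (2 * d)), ∀ i : Fin d,
      a (σ ⟨2 * i + 1, by omega⟩) = -a (σ ⟨2 * i, by omega⟩) := by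
  by_cases hn : n ∣ 2
  · exact ⟨1, fun i ↦ units_zmod_eq_neg hn _ _⟩
  have hcard : Fintype.card (Fin (2 * d)) * n = 2 * (d * n) := by
    rw [Fintype.card_fin, mul_assoc]
  exact exists_perm_apply_eq_neg (fun i ↦ units_zmod_ne_neg hn (a i)) <|
    card_fiber_eq_card_fiber_neg_of_sum_char_eq_zero fun χ hχ ↦
      sum_char_eq_zero_of_sum_val_eq (fun t ht ↦ sum_val_eq_of_le hcard hle ht) hχ

lemma fract_intCast_div_eq_zmod_val_div (n : ℕ) [NeZero n] (k : ℤ) :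
    Int.fract ((k : ℝ) / n) = ((k : ZMod n).val : ℝ) / n := by
  rw [Int.fract_div_intCast_eq_div_intCast_mod, ← ZMod.val_intCast, Int.cast_natCast]

/-- If the isolated cyclic quotient singularity of type `(a₁/n, …, a_{2d}/n)`
(`gcd(aᵢ, n) = 1`) has minimal log-discrepancy at least `d`, then after a permutation of the
indices `a_{2i-1} ≡ -a_{2i} (mod n)` for all `i = 1, …, d`. -/
theorem paired_of_mld_ge_d (d n : ℕ) (hd : 1 ≤ d) (hn : 1 ≤ n) (a : Fin (2*d) → ℤ)
    (hcop : ∀ i, Int.gcd (a i) n = 1)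
    (hmld : ∀ t : ℕ, 1 ≤ t → t ≤ n - 1 →
      (d : ℝ) ≤ ∑ i, Int.fract ((((t : ℤ) * a i : ℤ) : ℝ) / (n : ℝ))) :
    ∃ σ : Equiv.Perm (Fin (2*d)), ∀ i : Fin d,
      (n : ℤ) ∣ (a (σ ⟨2*(i : ℕ), by omega⟩) + a (σ ⟨2*(i : ℕ)+1, by omega⟩)) := by
  have : NeZero n := ⟨by omega⟩
  have hunit (i) : IsUnit (a i : ZMod n) := (ZMod.coe_int_isUnit_iff_isCoprime _ _).mpr
    (Int.isCoprime_iff_gcd_eq_one.mpr (hcop i)).symm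
  choose A hA using hunit
  obtain ⟨σ, hσ⟩ := exists_perm_apply_eq_neg_of_le_sum_val (a := A) fun t ht ↦ by
    have h := hmld t.val (ZMod.val_pos.mpr ht) (Nat.le_sub_one_of_lt t.val_lt)
    simp_rw [fract_intCast_div_eq_zmod_val_div, Int.cast_mul, Int.cast_natCast,
      ZMod.natCast_zmod_val, ← hA] at h
    rw [← Finset.sum_div, le_div_iff₀ (by exact_mod_cast hn)] at h
    exact_mod_cast h
  refine ⟨σ, fun i ↦ ?_⟩
  rw [← ZMod.intCast_zmod_eq_zero_iff_dvd, Int.cast_add, ← hA, ← hA, hσ, Units.val_neg,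
    add_neg_cancel]
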